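/- Let 𝒯 = {t_1, …, t_k} be a finite set of types, τ : 𝒮 → 𝒯, and for S ⊆ 𝒮 let n(S) ∈ ℕ^k be the type-count vector with n_i(S) = |{s ∈ S : τ(s) = t_i}|. Let f : ℕ^k → ℝ be a diversity index satisfying q-ordinal concavity: for all ξ, ξ̃ ∈ ℕ^k with Σ_{l=1}^k ξ_l = Σ_{l=1}^k ξ̃_l = q and every index i with ξ_i > ξ̃_i, there exists an index j with ξ_j < ξ̃_j such that at least one of the following holds: (i) f(ξ − χ_i + χ_j) > f(ξ); (ii) f(ξ̃ + χ_i − χ_j) > f(ξ̃); or (iii) f(ξ̃ + χ_i − χ_j) = f(ξ̃) and f(ξ − χ_i + χ_j) = f(ξ), where χ_i denotes the i-th standard basis vector of ℕ^k. Define the distributional preference by S ≿ S' iff f(n(S)) ≥ f(n(S')). Then ≿ satisfies the upper-bound property, the maximizer property, and the improvement property. -/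

import Mathlib

open Finset

variable {α : Type*}

/-- Strict part of a distributional preference. -/
def strictPref (pref : Finset α → Finset α → Prop) (A B : Finset α) : Prop :=
  pref A B ∧ ¬ pref B A

/-- Indifference part of a distributional preference. -/
def indiffPref (pref : Finset α → Finset α → Prop) (A B : Finset α) : Prop :=
  pref A B ∧ pref B A

/-- Incomparability under a distributional preference. -/
def incomparable (pref : Finset α → Finset α → Prop) (A B : Finset α) : Prop :=
  ¬ pref A B ∧ ¬ pref B A

/-- `NW q S` is the collection of non-wasteful subsets of `S`. -/
def NW (q : ℕ) (S : Finset α) : Set (Finset α) :=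
  {T | T ⊆ S ∧ T.card = min q S.card}

/-- The frontier of `S`: non-wasteful subsets undominated w.r.t. the preference. -/
def frontierSet (pref : Finset α → Finset α → Prop) (q : ℕ) (S : Finset α) :
    Set (Finset α) :=
  {T | T ∈ NW q S ∧ ∀ T' ∈ NW q S, ¬ strictPref pref T' T}

/-- The upper-bound property of a distributional preference. -/
def upperBoundProperty [DecidableEq α] (pref : Finset α → Finset α → Prop) (q : ℕ) : Prop :=
  ∀ S S' : Finset α, S.card = q → S'.card = q → incomparable pref S S' →
    ∃ S'' ∈ NW q (S ∪ S'), strictPref pref S'' S ∨ strictPref pref S'' S'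

/-- The maximizer property of a distributional preference. -/
def maximizerProperty [DecidableEq α] (pref : Finset α → Finset α → Prop) (q : ℕ) : Prop :=
  ∀ S S' : Finset α, S ≠ S' → S.card = q → S'.card = q →
    (∀ S'' ∈ NW q (S ∪ S'), pref S S'' ∧ pref S' S'') →
    ∃ s ∈ S \ S', ∃ s' ∈ S' \ S,
      indiffPref pref (S.erase s ∪ {s'}) S ∧ indiffPref pref (S'.erase s' ∪ {s}) S'

/-- The improvement property of a distributional preference. -/
def improvementProperty [DecidableEq α] (pref : Finset α → Finset α → Prop) (q : ℕ) : Prop :=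
  ∀ S S' : Finset α, S.card = q → S'.card = q → ∀ s ∈ S \ S',
    (∀ S'' ∈ NW q (S ∪ S'), s ∉ S'' → strictPref pref S S'') →
    (∀ S'' ∈ NW q (S ∪ S'), s ∈ S'' → pref S S'') →
    ∃ s' ∈ S' \ S, strictPref pref (S'.erase s' ∪ {s}) S'

/-- A choice rule is non-wasteful. -/
def nonWasteful (q : ℕ) (Ch : Finset α → Finset α) : Prop :=
  ∀ S : Finset α, (Ch S).card = min q S.card

/-- A choice rule promotes the distributional preference. -/
def promotesPref (pref : Finset α → Finset α → Prop) (Ch : Finset α → Finset α) : Prop :=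
  ∀ S : Finset α, ∀ S' ⊆ S, S'.card = (Ch S).card → ¬ strictPref pref S' (Ch S)

/-- A choice rule guarantees no justified envy with respect to priority ranking `π`. -/
def noJustifiedEnvy [DecidableEq α] (pref : Finset α → Finset α → Prop)
    (π : α → α → Prop) (Ch : Finset α → Finset α) : Prop :=
  ∀ S : Finset α, ∀ s ∈ Ch S, ∀ s' ∈ S \ Ch S,
    pref ((Ch S).erase s ∪ {s'}) (Ch S) → π s s'

/-- Path independence of a choice rule. -/
def pathIndependent [DecidableEq α] (Ch : Finset α → Finset α) : Prop :=
  ∀ S S' : Finset α, Ch (S ∪ S') = Ch (Ch S ∪ S')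

/-- Consistency of a choice rule. -/
def consistentRule [DecidableEq α] (Ch : Finset α → Finset α) : Prop :=
  ∀ S : Finset α, ∀ s ∈ S, s ∉ Ch S → Ch (S.erase s) = Ch S

/-- Substitutability of a choice rule. -/
def substitutableRule [DecidableEq α] (Ch : Finset α → Finset α) : Prop :=
  ∀ S : Finset α, ∀ s ∈ S, ∀ s' ∈ S, s ≠ s' → s ∈ Ch S → s ∈ Ch (S.erase s')

/-- `l` lists the elements of `A` in strictly decreasing `π`-priority. -/
def descList [DecidableEq α] (π : α → α → Prop) (A : Finset α) (l : List α) : Prop :=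
  l.Pairwise π ∧ l.Nodup ∧ l.toFinset = A

/-- `A` priority dominates `B` with respect to `π`. -/
def priorityDominates [DecidableEq α] (π : α → α → Prop) (A B : Finset α) : Prop :=
  B.card ≤ A.card ∧
  ∀ la lb : List α, descList π A la → descList π B lb →
    ∀ (k : ℕ) (ha : k < la.length) (hb : k < lb.length),
      la.get ⟨k, ha⟩ = lb.get ⟨k, hb⟩ ∨ π (la.get ⟨k, ha⟩) (lb.get ⟨k, hb⟩)

/-- The revealed preference axiom for a choice rule: no revealed-priority cycles. -/
def revealedPrefAxiom [DecidableEq α] (pref : Finset α → Finset α → Prop)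
    (Ch : Finset α → Finset α) : Prop :=
  ¬ ∃ (K : ℕ) (s : ℕ → α) (T : ℕ → Finset α), 0 < K ∧ s K = s 0 ∧
    ∀ k < K, s k ∈ Ch (T k) ∧ s (k + 1) ∈ T k \ Ch (T k) ∧
      pref ((Ch (T k)).erase (s k) ∪ {s (k + 1)}) (Ch (T k))

/-- `moveVec k ξ i j = ξ − χ_i + χ_j`, where `χ_i` is the `i`-th standard basis
vector of `ℕ^k`. -/
def moveVec (k : ℕ) (ξ : Fin k → ℕ) (i j : Fin k) : Fin k → ℕ :=
  fun l => ξ l - (if l = i then 1 else 0) + (if l = j then 1 else 0)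

/-- `q`-ordinal concavity of a diversity index `f : ℕ^k → ℝ`. -/
def qOrdinalConcave (k q : ℕ) (f : (Fin k → ℕ) → ℝ) : Prop :=
  ∀ ξ ξ' : Fin k → ℕ, (∑ l, ξ l) = q → (∑ l, ξ' l) = q →
    ∀ i : Fin k, ξ' i < ξ i →
      ∃ j : Fin k, ξ j < ξ' j ∧
        (f ξ < f (moveVec k ξ i j) ∨
         f ξ' < f (moveVec k ξ' j i) ∨
         (f (moveVec k ξ' j i) = f ξ' ∧ f (moveVec k ξ i j) = f ξ))

/-- The type-count vector of a set of students. -/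
def typeCount {α : Type*} (k : ℕ) [DecidableEq (Fin k)] (τ : α → Fin k)
    (S : Finset α) : Fin k → ℕ :=
  fun i => (S.filter fun s => τ s = i).card

theorem tc_exists {α : Type*} [DecidableEq α] (k : ℕ) (τ : α → Fin k) (S S' : Finset α) (j : Fin k)
    (h : typeCount k τ S j < typeCount k τ S' j) : ∃ s' ∈ S' \ S, τ s' = j := by
  unfold typeCount at h
  obtain ⟨x, hx, hx'⟩ := Finset.exists_mem_notMem_of_card_lt_card h
  simp only [mem_filter, not_and] at hx hx'
  exact ⟨x, mem_sdiff.2 ⟨hx.1, fun h => hx' h hx.2⟩, hx.2⟩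

theorem tc_exists_le {α : Type*} [DecidableEq α] (k : ℕ) (τ : α → Fin k) (S S' : Finset α) (s : α)
    (hs : s ∈ S \ S')
    (h : typeCount k τ S (τ s) ≤ typeCount k τ S' (τ s)) : ∃ s' ∈ S' \ S, τ s' = τ s := by
  rw [mem_sdiff] at hs
  by_contra! hc
  have hlt : (S'.filter fun x => τ x = τ s) ⊂ (S.filter fun x => τ x = τ s) := by
    refine (Finset.ssubset_iff_of_subset ?_).2 ⟨s, by simp [hs.1], by simp [hs.2]⟩
    intro x hx
    simp only [mem_filter] at hx ⊢
    refine ⟨?_, hx.2⟩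
    by_contra hxS
    exact hc x (mem_sdiff.2 ⟨hx.1, hxS⟩) hx.2
  have := Finset.card_lt_card hlt
  unfold typeCount at h
  omega

theorem tc_swap {α : Type*} [DecidableEq α] (k : ℕ) (τ : α → Fin k) (S : Finset α) (s s' : α)
    (hs : s ∈ S) (hs' : s' ∉ S) :
    typeCount k τ (S.erase s ∪ {s'}) = moveVec k (typeCount k τ S) (τ s) (τ s') := by
  funext l
  unfold typeCount moveVec
  rw [Finset.filter_union, Finset.card_union_of_disjoint, Finset.filter_erase]
  · congr 1
    · by_cases hl : l = τ s
      · subst hl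
        rw [Finset.card_erase_of_mem (by simp [hs])]; simp
      · rw [Finset.erase_eq_of_notMem (by simp [Ne.symm hl])]; simp [hl]
    · rw [Finset.filter_singleton]
      by_cases hl : l = τ s'
      · simp [hl]
      · simp [hl, Ne.symm hl]
  · apply Finset.disjoint_filter_filter
    simp [hs']

theorem tc_sum {α : Type*} (k : ℕ) (τ : α → Fin k) (S : Finset α) :
    (∑ l, typeCount k τ S l) = S.card :=
  (Finset.card_eq_sum_card_fiberwise (f := τ) (t := Finset.univ) (by simp [Set.MapsTo])).symm

theorem mv_self {α : Type*} (k : ℕ) (τ : α → Fin k) (S : Finset α) (s : α)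
    (hs : s ∈ S) : moveVec k (typeCount k τ S) (τ s) (τ s) = typeCount k τ S := by
  have : 0 < typeCount k τ S (τ s) := Finset.card_pos.2 ⟨s, by simp [hs]⟩
  funext l
  unfold moveVec
  by_cases hl : l = τ s
  · subst hl; simp; omega
  · simp [hl]

theorem nw_swap {α : Type*} [DecidableEq α] (S S' : Finset α) (s s' : α)
    (hs : s ∈ S) (hs' : s' ∈ S' \ S) : (S.erase s ∪ {s'}) ∈ NW S.card (S ∪ S') := by
  rw [mem_sdiff] at hs'
  refine ⟨?_, ?_⟩
  · intro x; simp only [mem_union, mem_erase, mem_singleton]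
    rintro (h | rfl)
    · exact Or.inl h.2
    · exact Or.inr hs'.1
  · rw [min_eq_left (Finset.card_le_card subset_union_left), Finset.card_union_of_disjoint
      (by simp [hs'.2]), Finset.card_erase_of_mem hs]
    have := Finset.card_pos.2 ⟨s, hs⟩
    simp; omega

/-- If the diversity index `f` satisfies `q`-ordinal concavity,
then the distributional preference comparing sets by `f` applied to their
type-count vectors satisfies the upper-bound, maximizer, and improvement
properties. -/
theorem stmt17 {α : Type*} [Fintype α] [Nonempty α] [DecidableEq α]
    (q : ℕ) (hq : 0 < q) (k : ℕ) (τ : α → Fin k) (f : (Fin k → ℕ) → ℝ)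
    (hf : qOrdinalConcave k q f) :
    upperBoundProperty
      (fun A B : Finset α => f (typeCount k τ B) ≤ f (typeCount k τ A)) q ∧
    maximizerProperty
      (fun A B : Finset α => f (typeCount k τ B) ≤ f (typeCount k τ A)) q ∧
    improvementProperty
      (fun A B : Finset α => f (typeCount k τ B) ≤ f (typeCount k τ A)) q := by
  refine ⟨?_, ?_, ?_⟩
  · intro S S' _ _ h
    exact absurd (le_total _ _) (not_or.2 h)
  · intro S S' hne hS hS' hmax
    have key : ∀ s ∈ S \ S', ∀ s' ∈ S' \ S,
        f (moveVec k (typeCount k τ S) (τ s) (τ s')) ≤ f (typeCount k τ S) ∧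
        f (moveVec k (typeCount k τ S') (τ s') (τ s)) ≤ f (typeCount k τ S') := by
      intro s hs s' hs'
      have h1 := nw_swap S S' s s' (mem_sdiff.1 hs).1 hs'
      have h2 := nw_swap S' S s' s (mem_sdiff.1 hs').1 hs
      rw [hS] at h1
      rw [hS', union_comm] at h2
      have h1 := (hmax _ h1).1
      have h2 := (hmax _ h2).2
      simp only at h1 h2
      rw [tc_swap k τ S s s' (mem_sdiff.1 hs).1 (mem_sdiff.1 hs').2] at h1
      rw [tc_swap k τ S' s' s (mem_sdiff.1 hs').1 (mem_sdiff.1 hs).2] at h2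
      exact ⟨h1, h2⟩
    suffices h : ∃ s ∈ S \ S', ∃ s' ∈ S' \ S,
        f (moveVec k (typeCount k τ S) (τ s) (τ s')) = f (typeCount k τ S) ∧
        f (moveVec k (typeCount k τ S') (τ s') (τ s)) = f (typeCount k τ S') by
      obtain ⟨s, hs, s', hs', h1, h2⟩ := h
      refine ⟨s, hs, s', hs', ?_, ?_⟩
      · unfold indiffPref; beta_reduce
        rw [tc_swap k τ S s s' (mem_sdiff.1 hs).1 (mem_sdiff.1 hs').2, h1]
        exact ⟨le_rfl, le_rfl⟩
      · unfold indiffPref; beta_reduce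
        rw [tc_swap k τ S' s' s (mem_sdiff.1 hs').1 (mem_sdiff.1 hs).2, h2]
        exact ⟨le_rfl, le_rfl⟩
    have hex : (S \ S').Nonempty := by
      rw [Finset.sdiff_nonempty]
      intro hsub
      exact hne (Finset.eq_of_subset_of_card_le hsub (by omega))
    obtain ⟨s, hs⟩ := hex
    by_cases hle : typeCount k τ S (τ s) ≤ typeCount k τ S' (τ s)
    · obtain ⟨s', hs', ht⟩ := tc_exists_le k τ S S' s hs hle
      refine ⟨s, hs, s', hs', ?_, ?_⟩
      · rw [ht, mv_self k τ S s (mem_sdiff.1 hs).1]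
      · rw [← ht, mv_self k τ S' s' (mem_sdiff.1 hs').1]
    · obtain ⟨j, hj, hc⟩ := hf _ _ ((tc_sum k τ S).trans hS) ((tc_sum k τ S').trans hS') (τ s)
        (not_le.1 hle)
      obtain ⟨s', hs', rfl⟩ := tc_exists k τ S S' j hj
      obtain ⟨k1, k2⟩ := key s hs s' hs'
      rcases hc with hc | hc | hc
      · exact absurd k1 (not_le.2 hc)
      · exact absurd k2 (not_le.2 hc)
      · exact ⟨s, hs, s', hs', hc.2, hc.1⟩
  · intro S S' hS hS' s hs hstr _
    have key : ∀ s' ∈ S' \ S,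
        f (moveVec k (typeCount k τ S) (τ s) (τ s')) < f (typeCount k τ S) := by
      intro s' hs'
      have h1 := nw_swap S S' s s' (mem_sdiff.1 hs).1 hs'
      rw [hS] at h1
      have hns : s ∉ S.erase s ∪ {s'} := by
        have : s ≠ s' := by rintro rfl; exact (mem_sdiff.1 hs').2 (mem_sdiff.1 hs).1
        simp [this]
      have h2 := (hstr _ h1 hns).2
      simp only at h2
      rw [tc_swap k τ S s s' (mem_sdiff.1 hs).1 (mem_sdiff.1 hs').2] at h2
      exact not_le.1 h2
    by_cases hle : typeCount k τ S (τ s) ≤ typeCount k τ S' (τ s)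
    · obtain ⟨s', hs', ht⟩ := tc_exists_le k τ S S' s hs hle
      have := key s' hs'
      rw [ht, mv_self k τ S s (mem_sdiff.1 hs).1] at this
      exact absurd this (lt_irrefl _)
    · obtain ⟨j, hj, hc⟩ := hf _ _ ((tc_sum k τ S).trans hS) ((tc_sum k τ S').trans hS') (τ s)
        (not_le.1 hle)
      obtain ⟨s', hs', rfl⟩ := tc_exists k τ S S' j hj
      have k1 := key s' hs'
      rcases hc with hc | hc | hc
      · exact absurd k1 (lt_asymm hc)
      · refine ⟨s', hs', ?_⟩
        unfold strictPref; beta_reduce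
        rw [tc_swap k τ S' s' s (mem_sdiff.1 hs').1 (mem_sdiff.1 hs).2]
        exact ⟨hc.le, not_le.2 hc⟩
      · exact absurd hc.2 k1.ne
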